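/- arXiv:1203.6869 — 5 statements merged into one kernel-verified Lean document; each statement's English description precedes it below -/
import Mathlib

section
/- The element r = P_a ⊗ J^a of iso(2,1) ⊗ iso(2,1) satisfies the classical Yang–Baxter equation [r₁₂, r₁₃] + [r₁₂, r₂₃] + [r₁₃, r₂₃] = 0 in iso(2,1) ⊗ iso(2,1) ⊗ iso(2,1). -/
noncomputable section

open scoped TensorProduct

/-- The ambient associative algebra: real 4×4 matrices.  `iso(2,1)` is realized inside it
via the standard affine embedding `x ↦ [[u, a], [0, 0]]`, and the Lie bracket is the
matrix commutator `⁅x, y⁆ = x * y - y * x`. -/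
abbrev G : Type := Matrix (Fin 4) (Fin 4) ℝ

/-- The totally antisymmetric tensor in three dimensions with `eps 0 1 2 = 1`. -/
def eps (a b c : Fin 3) : ℝ :=
  ((((b : ℕ) : ℝ) - ((a : ℕ) : ℝ)) * (((c : ℕ) : ℝ) - ((a : ℕ) : ℝ)) *
    (((c : ℕ) : ℝ) - ((b : ℕ) : ℝ))) / 2

/-- The Minkowski metric η = diag(1, −1, −1); it coincides with its inverse, so `ηf`
is used both for lower and upper indices. -/
def ηf (a b : Fin 3) : ℝ := if a = b then (if a = (0 : Fin 3) then 1 else -1) else 0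

/-- The 3×3 Lorentz generators of so(2,1): `(J3 a) b c = (J_a)^b{}_c = ε_{ac}{}^b`. -/
def J3 (a : Fin 3) : Matrix (Fin 3) (Fin 3) ℝ :=
  Matrix.of fun b c => ηf b b * eps a c b

/-- Embedding of a pair (3×3 matrix `u`, vector `x`) as the 4×4 matrix `[[u, x], [0, 0]]`. -/
def algEmb (u : Matrix (Fin 3) (Fin 3) ℝ) (x : Fin 3 → ℝ) : G :=
  Matrix.of fun i j =>
    if hi : (i : ℕ) < 3 then
      if hj : (j : ℕ) < 3 then u ⟨i, hi⟩ ⟨j, hj⟩ else x ⟨i, hi⟩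
    else 0

/-- The Lorentz generators `J_a` of iso(2,1), as 4×4 matrices. -/
def Jg (a : Fin 3) : G := algEmb (J3 a) 0

/-- The translation generators `P_a` of iso(2,1), as 4×4 matrices. -/
def Pg (a : Fin 3) : G := algEmb 0 (fun b => if b = a then 1 else 0)

/-- `iso(2,1)` = span{J₀, J₁, J₂, P₀, P₁, P₂} inside the 4×4 matrices. -/
def iso21 : Submodule ℝ G := Submodule.span ℝ (Set.range Jg ∪ Set.range Pg)

/-- Triple tensor product 𝔤 ⊗ 𝔤 ⊗ 𝔤 (associated to the left). -/
abbrev T3 : Type := TensorProduct ℝ (TensorProduct ℝ G G) G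

theorem sum_ηf_smul {M : Type*} [AddCommMonoid M] [Module ℝ M] (a : Fin 3) (f : Fin 3 → M) :
    ∑ b, ηf a b • f b = ηf a a • f a :=
  Finset.sum_eq_single a (fun b _ h => by simp [ηf, h.symm]) (by simp)

theorem eps_swap (a b c : Fin 3) : eps a c b = -eps a b c := by
  unfold eps
  ring

theorem lie_algEmb (u v : Matrix (Fin 3) (Fin 3) ℝ) (x y : Fin 3 → ℝ) :
    ⁅algEmb u x, algEmb v y⁆ = algEmb ⁅u, v⁆ (u.mulVec y - v.mulVec x) := by
  ext i j
  induction i using Fin.lastCases <;> induction j using Fin.lastCases <;>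
    simp [Ring.lie_def, Matrix.mul_apply, Matrix.mulVec, dotProduct,
      Fin.sum_univ_castSucc (n := 3), algEmb]

theorem algEmb_sum_smul (k : Fin 3 → ℝ) (u : Fin 3 → Matrix (Fin 3) (Fin 3) ℝ)
    (x : Fin 3 → Fin 3 → ℝ) :
    ∑ c, k c • algEmb (u c) (x c) = algEmb (∑ c, k c • u c) (∑ c, k c • x c) := by
  ext i j
  induction i using Fin.lastCases <;> induction j using Fin.lastCases <;>
    simp [Matrix.sum_apply, algEmb]

theorem lie_J3 (a b : Fin 3) : ⁅J3 a, J3 b⁆ = ∑ c, (ηf c c * eps a b c) • J3 c := by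
  have h₀ : ηf 0 0 = 1 := by simp [ηf]
  have h₁ : ηf 1 1 = -1 := by simp [ηf]
  have h₂ : ηf 2 2 = -1 := by simp [ηf, Fin.ext_iff]
  ext i j
  simp only [Ring.lie_def, Matrix.sub_apply, Matrix.mul_apply, Fin.sum_univ_three,
    Matrix.add_apply, Matrix.smul_apply, smul_eq_mul, J3, Matrix.of_apply, h₀, h₁, h₂]
  fin_cases a <;> fin_cases b <;> fin_cases i <;> fin_cases j <;> norm_num [eps, h₀, h₁, h₂]

theorem lie_Pg_Pg (a b : Fin 3) : ⁅Pg a, Pg b⁆ = 0 := by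
  rw [Pg, Pg, lie_algEmb]
  ext i j
  simp [algEmb, Ring.lie_def]

theorem lie_Jg_Pg (a b : Fin 3) : ⁅Jg a, Pg b⁆ = ∑ c, (ηf c c * eps a b c) • Pg c := by
  simp only [Jg, Pg, lie_algEmb, algEmb_sum_smul]
  congr 1
  · simp [Ring.lie_def]
  · ext i
    simp [Matrix.mulVec, dotProduct, J3]

theorem lie_Jg_Jg (a b : Fin 3) : ⁅Jg a, Jg b⁆ = ∑ c, (ηf c c * eps a b c) • Jg c := by
  simp [Jg, lie_algEmb, algEmb_sum_smul, lie_J3]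

/-- The classical r-matrix `r = P_a ⊗ J^a = ∑_{a,b} η^{ab} P_a ⊗ J_b`
satisfies the classical Yang–Baxter equation
`[r₁₂, r₁₃] + [r₁₂, r₂₃] + [r₁₃, r₂₃] = 0` in iso(2,1)⊗iso(2,1)⊗iso(2,1), where the
mixed brackets are written out in components:
`[r₁₂,r₁₃] = ∑ η^{ab} η^{cd} [P_a,P_c] ⊗ J_b ⊗ J_d`,
`[r₁₂,r₂₃] = ∑ η^{ab} η^{cd} P_a ⊗ [J_b,P_c] ⊗ J_d`,
`[r₁₃,r₂₃] = ∑ η^{ab} η^{cd} P_a ⊗ P_c ⊗ [J_b,J_d]`. -/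
theorem stmt1 :
    ∑ a : Fin 3, ∑ b : Fin 3, ∑ c : Fin 3, ∑ d : Fin 3,
      (ηf a b * ηf c d) •
        (((⁅Pg a, Pg c⁆ ⊗ₜ[ℝ] Jg b) ⊗ₜ[ℝ] Jg d)
          + ((Pg a ⊗ₜ[ℝ] ⁅Jg b, Pg c⁆) ⊗ₜ[ℝ] Jg d)
          + ((Pg a ⊗ₜ[ℝ] Pg c) ⊗ₜ[ℝ] ⁅Jg b, Jg d⁆)) = (0 : T3) := by
  simp only [mul_smul, ← Finset.smul_sum, sum_ηf_smul]
  simp only [lie_Pg_Pg, lie_Jg_Pg, lie_Jg_Jg, TensorProduct.zero_tmul, zero_add,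
    TensorProduct.tmul_sum, TensorProduct.sum_tmul, TensorProduct.tmul_smul,
    TensorProduct.smul_tmul', smul_add, Finset.smul_sum, smul_smul, Finset.sum_add_distrib]
  rw [← Finset.sum_add_distrib]
  refine Finset.sum_eq_zero fun a _ => ?_
  rw [Finset.sum_comm, ← Finset.sum_add_distrib]
  refine Finset.sum_eq_zero fun b _ => ?_
  rw [← Finset.sum_add_distrib]
  refine Finset.sum_eq_zero fun c _ => ?_
  rw [← TensorProduct.add_tmul, ← TensorProduct.add_tmul, ← add_smul, eps_swap a b c,
    show ηf a a * (ηf c c * (ηf b b * -eps a b c)) + ηf a a * (ηf b b * (ηf c c * eps a b c)) = 0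
      by ring, zero_smul, TensorProduct.zero_tmul, TensorProduct.zero_tmul]
end
end

section
/- For M = (u, a) ∈ ISO(2,1) define j = −u⁻¹ a ∈ ℝ³ (so that a = −Ad(u)j). Then the two functions M ↦ tr(u) and M ↦ tr((j^a J_a) · u) (3×3 matrix traces) are invariant under conjugation: for every g ∈ ISO(2,1), they take the same values at g·M·g⁻¹ as at M. -/
noncomputable section

/-- The Minkowski metric as a 3×3 matrix. -/
def ηm : Matrix (Fin 3) (Fin 3) ℝ := Matrix.of fun a b => ηf a b

/-- The full Lorentz group in three dimensions: {v | vᵀ η v = η}. -/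
def LorentzSet : Set (Matrix (Fin 3) (Fin 3) ℝ) := {v | v.transpose * ηm * v = ηm}

theorem one_mem_LorentzSet : (1 : Matrix (Fin 3) (Fin 3) ℝ) ∈ LorentzSet := by
  simp [LorentzSet]

/-- The proper orthochronous Lorentz group SO⁺(2,1): the identity component of
the Lorentz group {v | vᵀ η v = η}. -/
def SOplus : Set (Matrix (Fin 3) (Fin 3) ℝ) :=
  Subtype.val '' connectedComponent (⟨1, one_mem_LorentzSet⟩ : LorentzSet)

/-- The basis vector e₀ = (1, 0, 0) of ℝ³. -/
def e0v : Fin 3 → ℝ := fun i => if i = 0 then 1 else 0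

/-- Elements of ISO(2,1) = SO⁺(2,1) ⋉ ℝ³ as pairs (u, a). -/
abbrev Poinc : Type := Matrix (Fin 3) (Fin 3) ℝ × (Fin 3 → ℝ)

/-- Poincaré multiplication: (u₁, a₁)·(u₂, a₂) = (u₁u₂, a₁ + u₁a₂). -/
def pmul (m₁ m₂ : Poinc) : Poinc := (m₁.1 * m₂.1, m₁.2 + m₁.1.mulVec m₂.2)

/-- Poincaré inversion: (u, a)⁻¹ = (u⁻¹, −u⁻¹a). -/
def pinv (m : Poinc) : Poinc := (m.1⁻¹, -(m.1⁻¹.mulVec m.2))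

/-- The affine action of ISO(2,1) on ℝ³: (u, a)·y = uy + a. -/
def pact (m : Poinc) (y : Fin 3 → ℝ) : Fin 3 → ℝ := m.1.mulVec y + m.2

/-- The angular-momentum vector j of M = (u, a) ∈ ISO(2,1), defined by j = −u⁻¹a
(so that a = −Ad(u)j). -/
def jvec (m : Poinc) : Fin 3 → ℝ := -(m.1⁻¹.mulVec m.2)

/-- The totally antisymmetric form `E(x)_{bc} = x^a ε_{acb}` attached to a vector `x`. -/
def crossForm (x : Fin 3 → ℝ) : Matrix (Fin 3) (Fin 3) ℝ :=
  Matrix.of fun b c => ∑ a : Fin 3, x a * eps a c b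

/-- The Lie algebra element `x^a J_a`. -/
def lieElem (x : Fin 3 → ℝ) : Matrix (Fin 3) (Fin 3) ℝ := ∑ b : Fin 3, x b • J3 b

theorem lieElem_add (x y : Fin 3 → ℝ) : lieElem (x + y) = lieElem x + lieElem y := by
  simp [lieElem, add_smul, Finset.sum_add_distrib]

theorem lieElem_sub (x y : Fin 3 → ℝ) : lieElem (x - y) = lieElem x - lieElem y := by
  simp [lieElem, sub_smul, Finset.sum_sub_distrib]

theorem lieElem_eq_ηm_mul_crossForm (x : Fin 3 → ℝ) : lieElem x = ηm * crossForm x := by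
  ext b c
  fin_cases b <;>
    simp [lieElem, crossForm, ηm, ηf, J3, Matrix.mul_apply, Fin.sum_univ_three] <;> ring

theorem transpose_mul_crossForm_mulVec_mul (v : Matrix (Fin 3) (Fin 3) ℝ) (x : Fin 3 → ℝ) :
    v.transpose * crossForm (v.mulVec x) * v = v.det • crossForm x := by
  ext b c
  fin_cases b <;> fin_cases c <;>
    simp [crossForm, eps, Matrix.mul_apply, Matrix.mulVec, dotProduct, Fin.sum_univ_three,
      Matrix.det_fin_three] <;> ring

theorem ηm_mul_ηm : ηm * ηm = 1 := by
  ext b c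
  fin_cases b <;> fin_cases c <;> simp [ηm, ηf, Matrix.mul_apply]

theorem det_sq_eq_one_of_mem_LorentzSet {v : Matrix (Fin 3) (Fin 3) ℝ} (hv : v ∈ LorentzSet) :
    v.det ^ 2 = 1 := by
  have h : v.transpose * ηm * v = ηm := hv
  have hη : ηm.det * ηm.det = 1 := by rw [← Matrix.det_mul, ηm_mul_ηm, Matrix.det_one]
  have hd := congrArg Matrix.det h
  rw [Matrix.det_mul, Matrix.det_mul, Matrix.det_transpose] at hd
  linear_combination ηm.det * hd + (1 - v.det ^ 2) * hη

theorem mem_LorentzSet_of_mem_SOplus {v : Matrix (Fin 3) (Fin 3) ℝ} (hv : v ∈ SOplus) :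
    v ∈ LorentzSet := by
  obtain ⟨p, -, rfl⟩ := hv
  exact p.2

theorem det_eq_one_of_mem_SOplus {v : Matrix (Fin 3) (Fin 3) ℝ} (hv : v ∈ SOplus) :
    v.det = 1 := by
  obtain ⟨p, hp, rfl⟩ := hv
  rcases sq_eq_one_iff.mp (det_sq_eq_one_of_mem_LorentzSet p.2) with h | h
  · exact h
  · have hcont : Continuous fun q : LorentzSet => (q : Matrix (Fin 3) (Fin 3) ℝ).det :=
      continuous_subtype_val.matrix_det
    obtain ⟨q, -, hq⟩ := isPreconnected_connectedComponent.intermediate_value hp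
      mem_connectedComponent hcont.continuousOn
      (show (0 : ℝ) ∈ Set.Icc _ _ by simp [h])
    have := det_sq_eq_one_of_mem_LorentzSet q.2
    simp only at hq
    simp [hq] at this

/-- Equivariance of `x ↦ x^a J_a` under SO⁺(2,1). -/
theorem lieElem_mulVec_mul {v : Matrix (Fin 3) (Fin 3) ℝ} (hv : v ∈ SOplus) (x : Fin 3 → ℝ) :
    lieElem (v.mulVec x) * v = v * lieElem x := by
  have h : v.transpose * ηm * v = ηm := mem_LorentzSet_of_mem_SOplus hv
  have hl : (ηm * v.transpose * ηm) * v = 1 := by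
    rw [Matrix.mul_assoc, Matrix.mul_assoc, ← Matrix.mul_assoc v.transpose, h, ηm_mul_ηm]
  have hr : v * (ηm * v.transpose * ηm) = 1 := mul_eq_one_comm.mp hl
  have hc := transpose_mul_crossForm_mulVec_mul v x
  rw [det_eq_one_of_mem_SOplus hv, one_smul] at hc
  rw [lieElem_eq_ηm_mul_crossForm x, ← hc, lieElem_eq_ηm_mul_crossForm]
  calc ηm * crossForm (v.mulVec x) * v
      = (v * (ηm * v.transpose * ηm)) * (ηm * crossForm (v.mulVec x) * v) := by
        rw [hr, Matrix.one_mul]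
    _ = v * ηm * v.transpose * (ηm * ηm) * crossForm (v.mulVec x) * v := by
        simp only [Matrix.mul_assoc]
    _ = v * (ηm * (v.transpose * crossForm (v.mulVec x) * v)) := by
        rw [ηm_mul_ηm, Matrix.mul_one]
        simp only [Matrix.mul_assoc]

theorem isUnit_det_of_mem_SOplus {v : Matrix (Fin 3) (Fin 3) ℝ} (hv : v ∈ SOplus) :
    IsUnit v.det := by
  simp [det_eq_one_of_mem_SOplus hv]

theorem lieElem_mulVec {v : Matrix (Fin 3) (Fin 3) ℝ} (hv : v ∈ SOplus) (x : Fin 3 → ℝ) :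
    lieElem (v.mulVec x) = v * lieElem x * v⁻¹ := by
  rw [← lieElem_mulVec_mul hv, Matrix.mul_nonsing_inv_cancel_right _ _
    (isUnit_det_of_mem_SOplus hv)]

theorem trace_lieElem_inv_mulVec_mul {u : Matrix (Fin 3) (Fin 3) ℝ} (hu : u ∈ SOplus)
    (x : Fin 3 → ℝ) : (lieElem (u⁻¹.mulVec x) * u).trace = (lieElem x * u).trace := by
  have hd := isUnit_det_of_mem_SOplus hu
  have h := lieElem_mulVec hu (u⁻¹.mulVec x)
  rw [Matrix.mulVec_mulVec, Matrix.mul_nonsing_inv _ hd, Matrix.one_mulVec] at h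
  rw [h, Matrix.nonsing_inv_mul_cancel_right _ _ hd, Matrix.trace_mul_comm]

theorem jvec_conj {u w : Matrix (Fin 3) (Fin 3) ℝ} (hu : IsUnit u.det) (hw : IsUnit w.det)
    (a c : Fin 3 → ℝ) :
    jvec (pmul (pmul (w, c) (u, a)) (pinv (w, c))) =
      w.mulVec (jvec (u, a) + (w⁻¹.mulVec c - u⁻¹.mulVec (w⁻¹.mulVec c))) := by
  have hinv : (w * u * w⁻¹)⁻¹ = w * u⁻¹ * w⁻¹ := by
    rw [Matrix.mul_inv_rev, Matrix.mul_inv_rev, Matrix.nonsing_inv_nonsing_inv _ hw,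
      Matrix.mul_assoc]
  simp only [jvec, pmul, pinv, hinv, Matrix.mulVec_add, Matrix.mulVec_sub, Matrix.mulVec_neg,
    Matrix.mulVec_mulVec]
  have h₁ : w * u⁻¹ * w⁻¹ * w = w * u⁻¹ := Matrix.nonsing_inv_mul_cancel_right _ _ hw
  have h₂ : w * u⁻¹ * w⁻¹ * (w * u * w⁻¹) = 1 := by
    rw [← Matrix.mul_assoc, ← Matrix.mul_assoc, h₁, Matrix.nonsing_inv_mul_cancel_right _ _ hu,
      Matrix.mul_nonsing_inv _ hw]
  rw [h₁, h₂, Matrix.mul_nonsing_inv _ hw, ← Matrix.mul_assoc w]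
  abel

/-- For M = (u, a) ∈ ISO(2,1) with j = −u⁻¹a, the functions
`M ↦ tr(u)` and `M ↦ tr((j^a J_a) · u)` are invariant under conjugation:
for every g = (w, c) ∈ ISO(2,1), they take the same values at g·M·g⁻¹ as at M. -/
theorem stmt6 (u w : Matrix (Fin 3) (Fin 3) ℝ) (hu : u ∈ SOplus) (hw : w ∈ SOplus)
    (a c : Fin 3 → ℝ) :
    (pmul (pmul (w, c) (u, a)) (pinv (w, c))).1.trace = u.trace ∧
    ((∑ b : Fin 3, jvec (pmul (pmul (w, c) (u, a)) (pinv (w, c))) b • J3 b) *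
        (pmul (pmul (w, c) (u, a)) (pinv (w, c))).1).trace
      = ((∑ b : Fin 3, jvec (u, a) b • J3 b) * u).trace := by
  have hud := isUnit_det_of_mem_SOplus hu
  have hwd := isUnit_det_of_mem_SOplus hw
  have hconj : (pmul (pmul (w, c) (u, a)) (pinv (w, c))).1 = w * u * w⁻¹ := rfl
  rw [hconj]
  have htr (X : Matrix (Fin 3) (Fin 3) ℝ) : (w * X * w⁻¹).trace = X.trace := by
    rw [Matrix.trace_mul_comm, Matrix.nonsing_inv_mul_cancel_left _ _ hwd]
  refine ⟨htr u, ?_⟩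
  change (lieElem _ * _).trace = (lieElem _ * u).trace
  have hmul (X : Matrix (Fin 3) (Fin 3) ℝ) :
      w * X * w⁻¹ * (w * u * w⁻¹) = w * (X * u) * w⁻¹ := by
    rw [← Matrix.mul_assoc, ← Matrix.mul_assoc, Matrix.nonsing_inv_mul_cancel_right _ _ hwd,
      Matrix.mul_assoc w]
  rw [jvec_conj hud hwd, lieElem_mulVec hw, hmul, htr, lieElem_add, lieElem_sub, Matrix.add_mul,
    Matrix.sub_mul, Matrix.trace_add, Matrix.trace_sub, trace_lieElem_inv_mulVec_mul hu, sub_self,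
    add_zero]
end
end

section
/- For all ψ, α ∈ ℝ with cos(ψ/2) ≠ 0, the element r(ψ,α) = ½(P_a ⊗ J^a + J^a ⊗ P_a) + ½ tan(ψ/2)(P₁ ∧ J₂ − P₂ ∧ J₁) + (α / (4 cos²(ψ/2))) P₁ ∧ P₂ of iso(2,1) ⊗ iso(2,1) is invariant under the Cartan subalgebra 𝔥₁ = span{J₀, P₀}: for every x ∈ 𝔥₁, (ad_x ⊗ id + id ⊗ ad_x)(r(ψ,α)) = 0. -/
noncomputable section

open scoped TensorProduct

/-- 𝔤 ⊗ 𝔤. -/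
abbrev T2 : Type := TensorProduct ℝ G G

/-- `ad_x = [x, ·]` as a linear map. -/
def adL (x : G) : G →ₗ[ℝ] G := LinearMap.mulLeft ℝ x - LinearMap.mulRight ℝ x

/-- `ad_x ⊗ id + id ⊗ ad_x` acting factor-wise on 𝔤 ⊗ 𝔤. -/
def adT (x : G) : T2 →ₗ[ℝ] T2 :=
  TensorProduct.map (adL x) LinearMap.id + TensorProduct.map LinearMap.id (adL x)

/-- `x ∧ y = x ⊗ y − y ⊗ x` for `x, y ∈ 𝔤`. -/
def wT (x y : G) : T2 := x ⊗ₜ[ℝ] y - y ⊗ₜ[ℝ] x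

/-- The ad-invariant symmetric element `½(P_a ⊗ J^a + J^a ⊗ P_a)`. -/
def tHalf : T2 :=
  ∑ a : Fin 3, ∑ b : Fin 3, ((1 : ℝ) / 2 * ηf a b) • (Pg a ⊗ₜ[ℝ] Jg b + Jg b ⊗ₜ[ℝ] Pg a)

/-- The commutator of two affinely embedded pairs. -/
theorem adL_algEmb (u v : Matrix (Fin 3) (Fin 3) ℝ) (x y : Fin 3 → ℝ) :
    adL (algEmb u x) (algEmb v y) =
      algEmb (u * v - v * u) (u.mulVec y - v.mulVec x) := by
  ext i j
  fin_cases i <;> fin_cases j <;>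
    simp [adL, algEmb, Matrix.mul_apply, Fin.sum_univ_succ, Matrix.mulVec, dotProduct]

theorem algEmb_linearCombination (c : Fin 3 → ℝ) (u : Fin 3 → Matrix (Fin 3) (Fin 3) ℝ)
    (x : Fin 3 → Fin 3 → ℝ) :
    ∑ k, c k • algEmb (u k) (x k) = algEmb (∑ k, c k • u k) (∑ k, c k • x k) := by
  ext i j
  simp only [Matrix.sum_apply, Matrix.smul_apply, algEmb, Matrix.of_apply]
  split_ifs <;> simp

theorem J3_zero : J3 0 = !![0, 0, 0; 0, 0, 1; 0, -1, 0] := by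
  ext i j
  fin_cases i <;> fin_cases j <;> norm_num [J3, eps, ηf]

theorem J3_one : J3 1 = !![0, 0, 1; 0, 0, 0; 1, 0, 0] := by
  ext i j
  fin_cases i <;> fin_cases j <;> norm_num [J3, eps, ηf]

theorem J3_two : J3 2 = !![0, -1, 0; -1, 0, 0; 0, 0, 0] := by
  ext i j
  fin_cases i <;> fin_cases j <;> norm_num [J3, eps, ηf]

/-- `[J_a, J_b] = ε_{ab}{}^c J_c`. -/
theorem adL_Jg_Jg (a b : Fin 3) : adL (Jg a) (Jg b) = ∑ c, (eps a b c * ηf c c) • Jg c := by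
  simp only [Jg, adL_algEmb, algEmb_linearCombination]
  congr 1
  · rw [Fin.sum_univ_three]
    fin_cases a <;> fin_cases b <;>
      simp only [Fin.zero_eta, Fin.mk_one, Fin.reduceFinMk, J3_zero, J3_one, J3_two] <;>
      norm_num [eps, ηf, Fin.ext_iff, funext_iff, Fin.forall_fin_succ]
  · simp

/-- `[J_a, P_b] = ε_{ab}{}^c P_c`. -/
theorem adL_Jg_Pg (a b : Fin 3) : adL (Jg a) (Pg b) = ∑ c, (eps a b c * ηf c c) • Pg c := by
  simp only [Jg, Pg, adL_algEmb, algEmb_linearCombination]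
  congr 1
  · simp
  · ext i
    simp [J3, Matrix.mulVec, dotProduct, mul_comm]

/-- `[P_a, P_b] = 0`. -/
theorem adL_Pg_Pg (a b : Fin 3) : adL (Pg a) (Pg b) = 0 := by
  ext i j
  rw [Pg, Pg, adL_algEmb]
  simp [algEmb]

theorem adL_swap (x y : G) : adL x y = -adL y x := by
  simp [adL]

/-- `[P_a, J_b] = ε_{ab}{}^c P_c`. -/
theorem adL_Pg_Jg (a b : Fin 3) : adL (Pg a) (Jg b) = ∑ c, (eps a b c * ηf c c) • Pg c := by
  rw [adL_swap, adL_Jg_Pg, ← Finset.sum_neg_distrib]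
  refine Finset.sum_congr rfl fun c _ => ?_
  rw [← neg_smul]
  congr 1
  simp only [eps]
  ring

theorem adT_tmul (x y z : G) : adT x (y ⊗ₜ[ℝ] z) = adL x y ⊗ₜ[ℝ] z + y ⊗ₜ[ℝ] adL x z := by
  simp [adT]

/-- The action on a fixed `r`, as a linear map of the acting element. -/
def adTLinear (r : T2) : G →ₗ[ℝ] T2 where
  toFun x := adT x r
  map_add' x y := by
    have h : adL (x + y) = adL x + adL y := by
      ext1 z
      simp [adL, add_mul, mul_add]
      abel
    simp only [adT, h, TensorProduct.map_add_left, TensorProduct.map_add_right,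
      LinearMap.add_apply]
    abel
  map_smul' c x := by
    have h : adL (c • x) = c • adL x := by
      ext1 z
      simp [adL, smul_sub]
    simp [adT, h, TensorProduct.map_smul_left, TensorProduct.map_smul_right]

/-- For all ψ, α ∈ ℝ with cos(ψ/2) ≠ 0, the element
`r(ψ,α) = ½(P_a ⊗ J^a + J^a ⊗ P_a) + ½ tan(ψ/2)(P₁ ∧ J₂ − P₂ ∧ J₁)
          + (α / (4 cos²(ψ/2))) P₁ ∧ P₂`
of iso(2,1) ⊗ iso(2,1) is invariant under the Cartan subalgebra 𝔥₁ = span{J₀, P₀}: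
`(ad_x ⊗ id + id ⊗ ad_x)(r(ψ,α)) = 0` for every `x ∈ 𝔥₁`. -/
theorem stmt9 (ψ α : ℝ) (h : Real.cos (ψ / 2) ≠ 0) :
    ∀ x ∈ Submodule.span ℝ ({Jg 0, Pg 0} : Set G),
      adT x (tHalf
        + (Real.tan (ψ / 2) / 2) • (wT (Pg 1) (Jg 2) - wT (Pg 2) (Jg 1))
        + (α / (4 * Real.cos (ψ / 2) ^ 2)) • wT (Pg 1) (Pg 2)) = 0 := by
  intro x hx
  set r : T2 := tHalf
        + (Real.tan (ψ / 2) / 2) • (wT (Pg 1) (Jg 2) - wT (Pg 2) (Jg 1))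
        + (α / (4 * Real.cos (ψ / 2) ^ 2)) • wT (Pg 1) (Pg 2) with hr
  suffices hle : Submodule.span ℝ ({Jg 0, Pg 0} : Set G) ≤ LinearMap.ker (adTLinear r) from
    hle hx
  rw [Submodule.span_le]
  rintro y (rfl | rfl)
  · change adT (Jg 0) r = 0
    simp only [hr, tHalf, wT, Fin.sum_univ_three, map_add, map_sub, map_smul, adT_tmul,
      adL_Jg_Jg, adL_Jg_Pg]
    norm_num [eps, ηf, Fin.ext_iff, TensorProduct.neg_tmul, TensorProduct.tmul_neg]
    module
  · change adT (Pg 0) r = 0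
    simp only [hr, tHalf, wT, Fin.sum_univ_three, map_add, map_sub, map_smul, adT_tmul,
      adL_Pg_Jg, adL_Pg_Pg]
    norm_num [eps, ηf, Fin.ext_iff, TensorProduct.neg_tmul, TensorProduct.tmul_neg]
end
end

section
/- The two-dimensional subspaces 𝔥₁ = span{J₀, P₀} and 𝔥₂ = span{J₁, P₁} of iso(2,1) are Cartan subalgebras: each is an abelian (hence nilpotent) Lie subalgebra that is self-normalizing in iso(2,1). -/
noncomputable section

open scoped TensorProduct

/-- The element `∑ a, (u a • J_a + p a • P_a)` of `iso(2,1)`, written out as a matrix. -/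
def isoMatrix (u p : Fin 3 → ℝ) : G :=
  !![0, -u 2, u 1, p 0; -u 2, 0, u 0, p 1; u 1, -u 0, 0, p 2; 0, 0, 0, 0]

/-- The Minkowski cross product: `c`-th component `ε_{ab}{}^c u^a v^b`. -/
def lorentzCross (u v : Fin 3 → ℝ) : Fin 3 → ℝ :=
  ![u 1 * v 2 - u 2 * v 1, u 0 * v 2 - u 2 * v 0, u 1 * v 0 - u 0 * v 1]

theorem Jg_eq_isoMatrix (a : Fin 3) : Jg a = isoMatrix (Pi.single a 1) 0 := by
  ext i j
  fin_cases a <;> fin_cases i <;> fin_cases j <;>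
    norm_num [Jg, algEmb, J3, ηf, eps, isoMatrix, Pi.single_apply] <;> decide

theorem Pg_eq_isoMatrix (a : Fin 3) : Pg a = isoMatrix 0 (Pi.single a 1) := by
  ext i j
  fin_cases a <;> fin_cases i <;> fin_cases j <;>
    norm_num [Pg, algEmb, isoMatrix, Pi.single_apply] <;> decide

theorem isoMatrix_add (u p v q : Fin 3 → ℝ) :
    isoMatrix u p + isoMatrix v q = isoMatrix (u + v) (p + q) := by
  ext i j
  fin_cases i <;> fin_cases j <;> simp [isoMatrix] <;> ring

theorem smul_isoMatrix (r : ℝ) (u p : Fin 3 → ℝ) :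
    r • isoMatrix u p = isoMatrix (r • u) (r • p) := by
  ext i j
  fin_cases i <;> fin_cases j <;> simp [isoMatrix]

theorem isoMatrix_inj {u p v q : Fin 3 → ℝ} (h : isoMatrix u p = isoMatrix v q) :
    u = v ∧ p = q := by
  have entry (i j : Fin 4) := congrFun (congrFun h i) j
  constructor <;> ext k <;> fin_cases k
  · simpa [isoMatrix] using entry 1 2
  · simpa [isoMatrix] using entry 0 2
  · simpa [isoMatrix] using entry 0 1
  · simpa [isoMatrix] using entry 0 3
  · simpa [isoMatrix] using entry 1 3
  · simpa [isoMatrix] using entry 2 3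

theorem lie_isoMatrix (u p v q : Fin 3 → ℝ) :
    ⁅isoMatrix u p, isoMatrix v q⁆ =
      isoMatrix (lorentzCross u v) (lorentzCross u q + lorentzCross p v) := by
  ext i j
  fin_cases i <;> fin_cases j <;>
    simp [Ring.lie_def, isoMatrix, lorentzCross] <;> ring

theorem exists_isoMatrix_of_mem_iso21 {x : G} (hx : x ∈ iso21) :
    ∃ u p, x = isoMatrix u p := by
  induction hx using Submodule.span_induction with
  | mem x hx =>
    rcases hx with ⟨a, rfl⟩ | ⟨a, rfl⟩
    · exact ⟨_, _, Jg_eq_isoMatrix a⟩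
    · exact ⟨_, _, Pg_eq_isoMatrix a⟩
  | zero => exact ⟨0, 0, by ext i j; fin_cases i <;> fin_cases j <;> simp [isoMatrix]⟩
  | add x y _ _ hx hy =>
    obtain ⟨u, p, rfl⟩ := hx
    obtain ⟨v, q, rfl⟩ := hy
    exact ⟨_, _, isoMatrix_add u p v q⟩
  | smul r x _ hx =>
    obtain ⟨u, p, rfl⟩ := hx
    exact ⟨_, _, smul_isoMatrix r u p⟩

theorem mem_span_Jg_Pg_iff {a : Fin 3} {x : G} :
    x ∈ Submodule.span ℝ ({Jg a, Pg a} : Set G) ↔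
      ∃ s t : ℝ, x = isoMatrix (Pi.single a s) (Pi.single a t) := by
  simp only [Submodule.mem_span_pair, Jg_eq_isoMatrix, Pg_eq_isoMatrix, smul_isoMatrix,
    isoMatrix_add, ← Pi.single_smul, smul_zero, add_zero, zero_add, smul_eq_mul, mul_one, eq_comm]

theorem span_Jg_Pg_le_iso21 (a : Fin 3) :
    Submodule.span ℝ ({Jg a, Pg a} : Set G) ≤ iso21 := by
  refine Submodule.span_mono ?_
  rintro x (rfl | rfl)
  · exact Or.inl ⟨a, rfl⟩
  · exact Or.inr ⟨a, rfl⟩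

theorem lie_eq_zero_of_mem_span_Jg_Pg {a : Fin 3} {x y : G}
    (hx : x ∈ Submodule.span ℝ ({Jg a, Pg a} : Set G))
    (hy : y ∈ Submodule.span ℝ ({Jg a, Pg a} : Set G)) : ⁅x, y⁆ = 0 := by
  obtain ⟨s, t, rfl⟩ := mem_span_Jg_Pg_iff.1 hx
  obtain ⟨s', t', rfl⟩ := mem_span_Jg_Pg_iff.1 hy
  rw [lie_isoMatrix]
  ext i j
  fin_cases a <;> fin_cases i <;> fin_cases j <;>
    simp [isoMatrix, lorentzCross]

/-- If the cross product with the `a`-th basis vector is along that vector, so is `u`. -/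
theorem eq_single_of_lorentzCross_eq_single {a : Fin 3} {u : Fin 3 → ℝ} {s : ℝ}
    (h : lorentzCross u (Pi.single a 1) = Pi.single a s) : u = Pi.single a (u a) := by
  have h0 := congrFun h 0
  have h1 := congrFun h 1
  have h2 := congrFun h 2
  ext k
  fin_cases a <;> fin_cases k <;> simp [lorentzCross] at h0 h1 h2 ⊢ <;> linarith

theorem lorentzCross_zero (u : Fin 3 → ℝ) : lorentzCross u 0 = 0 := by
  ext k
  fin_cases k <;> simp [lorentzCross]

theorem mem_span_Jg_Pg_of_lie_mem {a : Fin 3} {x : G} (hx : x ∈ iso21)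
    (h : ∀ y ∈ Submodule.span ℝ ({Jg a, Pg a} : Set G),
      ⁅x, y⁆ ∈ Submodule.span ℝ ({Jg a, Pg a} : Set G)) :
    x ∈ Submodule.span ℝ ({Jg a, Pg a} : Set G) := by
  obtain ⟨u, p, rfl⟩ := exists_isoMatrix_of_mem_iso21 hx
  obtain ⟨s, t, hst⟩ := mem_span_Jg_Pg_iff.1 (h (Jg a) (Submodule.subset_span (by simp)))
  rw [Jg_eq_isoMatrix, lie_isoMatrix, lorentzCross_zero, zero_add] at hst
  obtain ⟨hu, hp⟩ := isoMatrix_inj hst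
  exact mem_span_Jg_Pg_iff.2 ⟨u a, p a, by
    rw [← eq_single_of_lorentzCross_eq_single hu, ← eq_single_of_lorentzCross_eq_single hp]⟩

/-- The two-dimensional subspaces 𝔥₁ = span{J₀, P₀} and
𝔥₂ = span{J₁, P₁} of iso(2,1) are Cartan subalgebras: each is an abelian (hence
nilpotent) Lie subalgebra of iso(2,1) that is self-normalizing in iso(2,1). -/
theorem stmt11 :
    (Submodule.span ℝ ({Jg 0, Pg 0} : Set G) ≤ iso21
      ∧ (∀ x ∈ Submodule.span ℝ ({Jg 0, Pg 0} : Set G),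
          ∀ y ∈ Submodule.span ℝ ({Jg 0, Pg 0} : Set G), ⁅x, y⁆ = (0 : G))
      ∧ (∀ x ∈ iso21,
          (∀ y ∈ Submodule.span ℝ ({Jg 0, Pg 0} : Set G),
            ⁅x, y⁆ ∈ Submodule.span ℝ ({Jg 0, Pg 0} : Set G)) →
          x ∈ Submodule.span ℝ ({Jg 0, Pg 0} : Set G))) ∧
    (Submodule.span ℝ ({Jg 1, Pg 1} : Set G) ≤ iso21
      ∧ (∀ x ∈ Submodule.span ℝ ({Jg 1, Pg 1} : Set G),
          ∀ y ∈ Submodule.span ℝ ({Jg 1, Pg 1} : Set G), ⁅x, y⁆ = (0 : G))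
      ∧ (∀ x ∈ iso21,
          (∀ y ∈ Submodule.span ℝ ({Jg 1, Pg 1} : Set G),
            ⁅x, y⁆ ∈ Submodule.span ℝ ({Jg 1, Pg 1} : Set G)) →
          x ∈ Submodule.span ℝ ({Jg 1, Pg 1} : Set G))) := by
  have cartan (a : Fin 3) := And.intro (span_Jg_Pg_le_iso21 a) (And.intro
    (fun x hx y hy => lie_eq_zero_of_mem_span_Jg_Pg (a := a) (x := x) (y := y) hx hy)
    (fun x hx h => mem_span_Jg_Pg_of_lie_mem (a := a) (x := x) hx h))
  exact ⟨cartan 0, cartan 1⟩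
end
end

section
/- The Cartan subalgebras 𝔥₁ = span{J₀, P₀} and 𝔥₂ = span{J₁, P₁} of iso(2,1) are not conjugate: there is no g ∈ ISO(2,1) with Ad(g)(𝔥₁) = 𝔥₂. -/
noncomputable section

open scoped TensorProduct

/-- Embedding of a pair (3×3 matrix `u`, vector `a`) as the 4×4 matrix `[[u, a], [0, 1]]`. -/
def grpEmb (u : Matrix (Fin 3) (Fin 3) ℝ) (a : Fin 3 → ℝ) : G :=
  Matrix.of fun i j =>
    if hi : (i : ℕ) < 3 then
      if hj : (j : ℕ) < 3 then u ⟨i, hi⟩ ⟨j, hj⟩ else a ⟨i, hi⟩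
    else if (j : ℕ) < 3 then 0 else 1

/-- The Poincaré group ISO(2,1) = SO⁺(2,1) ⋉ ℝ³, realized as 4×4 matrices `[[u, a], [0, 1]]`. -/
def ISOgrp : Set G := {M | ∃ u ∈ SOplus, ∃ a : Fin 3 → ℝ, M = grpEmb u a}

/-- The adjoint action `Ad(g) : x ↦ g x g⁻¹` as a linear map on the ambient matrix algebra. -/
def conjLin (g : G) : G →ₗ[ℝ] G :=
  (LinearMap.mulLeft ℝ g).comp (LinearMap.mulRight ℝ g⁻¹)

/-- Conjugation by an arbitrary square matrix either preserves `tr (X²)` or, when the matrix is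
singular, sends everything to zero. -/
theorem trace_sq_conjLin (g X : G) :
    (conjLin g X * conjLin g X).trace = (X * X).trace ∨ conjLin g X = 0 := by
  by_cases hg : IsUnit g.det
  · left
    have h : conjLin g X * conjLin g X = g * (X * X * g⁻¹) := by
      simp [conjLin, Matrix.mul_assoc, Matrix.nonsing_inv_mul_cancel_left _ _ hg]
    rw [h, Matrix.trace_mul_comm, Matrix.mul_assoc, Matrix.nonsing_inv_mul _ hg, Matrix.mul_one]
  · right
    simp [conjLin, Matrix.nonsing_inv_apply_not_isUnit _ hg]

theorem trace_sq_Jg_one : (Jg 1 * Jg 1).trace = 2 := by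
  simp [Matrix.trace, Matrix.mul_apply, Fin.sum_univ_four, Jg, algEmb, J3, ηf, eps]
  norm_num

theorem trace_sq_smul_Jg_zero_add_smul_Pg_zero (a b : ℝ) :
    ((a • Jg 0 + b • Pg 0) * (a • Jg 0 + b • Pg 0)).trace = -2 * a ^ 2 := by
  simp [Matrix.trace, Matrix.mul_apply, Fin.sum_univ_four, Jg, Pg, algEmb, J3, ηf, eps]
  ring

/-- The Cartan subalgebras 𝔥₁ = span{J₀, P₀} and 𝔥₂ = span{J₁, P₁} of
iso(2,1) are not conjugate: there is no g ∈ ISO(2,1) with Ad(g)(𝔥₁) = 𝔥₂. -/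
theorem stmt13 :
    ¬ ∃ g ∈ ISOgrp,
        Submodule.map (conjLin g) (Submodule.span ℝ ({Jg 0, Pg 0} : Set G)) =
          Submodule.span ℝ ({Jg 1, Pg 1} : Set G) := by
  rintro ⟨g, -, hg⟩
  have hJ : Jg 1 ∈ Submodule.span ℝ ({Jg 1, Pg 1} : Set G) :=
    Submodule.subset_span (Set.mem_insert _ _)
  rw [← hg] at hJ
  obtain ⟨X, hX, hXJ⟩ := hJ
  obtain ⟨a, b, rfl⟩ := Submodule.mem_span_pair.mp hX
  have hJ1 := trace_sq_Jg_one
  rcases trace_sq_conjLin g (a • Jg 0 + b • Pg 0) with h | h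
  · rw [hXJ, hJ1, trace_sq_smul_Jg_zero_add_smul_Pg_zero] at h
    nlinarith [sq_nonneg a]
  · rw [← hXJ, h] at hJ1
    simp at hJ1
end
end
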